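/- arXiv:2310.15444 — 2 statements merged into one kernel-verified Lean document; each statement's English description precedes it below -/
import Mathlib

section
/- Let Z be a measurable space, N ≥ 1, p ≥ 1, T ≥ 1, b > 0, and let g : ℝ^p × Z → ℝ^p be a measurable per-sample gradient map with sup_{θ,z} ‖g(θ,z)‖₁ ≤ L_adv. Let A be the noisy adversarial SGD kernel from Z^N to (ℝ^p)^T (outputting the joint law of the trajectory (θ₁,…,θ_T)). Then for every δ' ∈ (0,1), A is (ε, δ)-differentially private with ε = ε₀·√(2·T·log(N/δ')) + T·ε₀·(e^{ε₀} − 1), δ = δ'/N, and ε₀ = 2·L_adv/(N·b). -/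
open MeasureTheory

/-- Two datasets `S, S' ∈ Z^N` are neighboring if they differ in at most one
coordinate. -/
def Neighboring {Z : Type*} {N : ℕ} (S S' : Fin N → Z) : Prop :=
  ∃ i : Fin N, ∀ j : Fin N, j ≠ i → S j = S' j

/-- A randomized algorithm is `(ε,δ)`-differentially private if for all
neighboring datasets `S, S'` and every measurable set `E` of outputs,
`P(A(S) ∈ E) ≤ e^ε · P(A(S') ∈ E) + δ`. -/
def IsDP {Z : Type*} [MeasurableSpace Z] {N : ℕ} {Ω : Type*} [MeasurableSpace Ω]
    (A : (Fin N → Z) → Measure Ω) (ε δ : ℝ) : Prop :=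
  ∀ S S' : Fin N → Z, Neighboring S S' → ∀ E : Set Ω, MeasurableSet E →
    A S E ≤ ENNReal.ofReal (Real.exp ε) * A S' E + ENNReal.ofReal δ

/-- Density of the `d`-dimensional Laplace distribution `Lap(μ, b)` with respect
to Lebesgue measure: `(2b)^{-d}·exp(−‖x−μ‖₁/b)`. -/
noncomputable def lapDensity (d : ℕ) (μ : Fin d → ℝ) (b : ℝ) (x : Fin d → ℝ) : ℝ :=
  ((2 * b) ^ d)⁻¹ * Real.exp (-(∑ i, |x i - μ i|) / b)

/-- The averaged per-sample gradient `(1/N)·Σ_{i=1}^N g(θ, z_i)`. -/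
noncomputable def avgGrad {Z : Type*} {p N : ℕ}
    (g : (Fin p → ℝ) → Z → Fin p → ℝ) (θ : Fin p → ℝ) (S : Fin N → Z) :
    Fin p → ℝ :=
  fun i => (∑ j, g θ (S j) i) / N

/-- The iterate preceding step `t` in a trajectory `θ : Fin T → ℝ^p`
with initial point `θ₀`: it is `θ₀` for `t = 0` and `θ_{t-1}` otherwise. -/
def prevIter {p T : ℕ} (θ₀ : Fin p → ℝ) (θ : Fin T → Fin p → ℝ) (t : Fin T) :
    Fin p → ℝ :=
  if h : (t : ℕ) = 0 then θ₀
  else θ ⟨(t : ℕ) - 1, lt_of_le_of_lt (Nat.sub_le _ _) t.isLt⟩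

/-- Joint density (w.r.t. Lebesgue measure on `(ℝ^p)^T`) of the trajectory
`(θ₁,…,θ_T)` of noisy adversarial SGD: `θ_t = θ_{t-1} − η_t·G_t` with
`G_t ∼ Lap((1/N)·Σᵢ g(θ_{t-1}, zᵢ), b)` conditionally on `θ_{t-1}`.  Each factor
is the Laplace density of `G_t = (θ_{t-1} − θ_t)/η_t` times the Jacobian
`η_t^{-p}` of the change of variables. -/
noncomputable def sgdDensity {Z : Type*} (p N T : ℕ)
    (g : (Fin p → ℝ) → Z → Fin p → ℝ) (θ₀ : Fin p → ℝ) (η : Fin T → ℝ) (b : ℝ)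
    (S : Fin N → Z) (θ : Fin T → Fin p → ℝ) : ℝ :=
  ∏ t : Fin T,
    (η t ^ p)⁻¹ *
      lapDensity p (avgGrad g (prevIter θ₀ θ t) S) b
        (fun i => (prevIter θ₀ θ t i - θ t i) / η t)

/-- The noisy adversarial SGD kernel: the map sending a dataset `S ∈ Z^N` to the
joint law of the trajectory `(θ₁,…,θ_T) ∈ (ℝ^p)^T`. -/
noncomputable def sgdMeasure {Z : Type*} (p N T : ℕ)
    (g : (Fin p → ℝ) → Z → Fin p → ℝ) (θ₀ : Fin p → ℝ) (η : Fin T → ℝ) (b : ℝ)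
    (S : Fin N → Z) : Measure (Fin T → Fin p → ℝ) :=
  MeasureTheory.volume.withDensity
    (fun θ => ENNReal.ofReal (sgdDensity p N T g θ₀ η b S θ))

/-!
The privacy loss of one noisy gradient step is bounded by `c = ε₀`, because the means of the two
Laplace laws are within `2 * Ladv / N` in `ℓ¹`. A loss bounded by `c` has mean at most
`c * (exp c - 1)` and, by Hoeffding's lemma, is sub-Gaussian around its mean with variance proxy
`c ^ 2`. As these bounds hold conditionally on the past, moments of the likelihood ratio of the two
trajectory laws multiply along the trajectory, so the total loss is sub-Gaussian with mean bound
`T * c * (exp c - 1)` and variance proxy `T * c ^ 2`. Chernoff's bound on its upper tail then gives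
`δ`, and off this tail the two trajectory densities differ by a factor of at most `exp ε`.
-/

open Real ProbabilityTheory
open scoped ENNReal Topology

section LikelihoodRatio

variable {α : Type*} [MeasurableSpace α] {μ : Measure α} {f f' : α → ℝ}

/-- The moment `∫ f * (f / f') ^ l` of the likelihood ratio of two densities: the exponential of
`l` times the Rényi divergence of order `1 + l` of `f` from `f'`. It takes values in `ℝ≥0∞`, so that
no integrability has to be carried along. -/
noncomputable def renyiMoment (μ : Measure α) (f f' : α → ℝ) (l : ℝ) : ℝ≥0∞ :=
  ∫⁻ x, ENNReal.ofReal (f x * (f x / f' x) ^ l) ∂μ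

lemma le_exp_mul_add_exp_neg_mul_rpow_div {u v l : ℝ} (hu : 0 ≤ u) (hv : 0 < v) (hl : 0 ≤ l)
    (ε : ℝ) : u ≤ exp ε * v + exp (-(l * ε)) * (u * (u / v) ^ l) := by
  by_cases h : u ≤ exp ε * v
  · exact le_add_of_le_of_nonneg h (by positivity)
  · have hratio : exp ε ≤ u / v := ((lt_div_iff₀ hv).2 (not_le.1 h)).le
    have hpow : exp (l * ε) ≤ (u / v) ^ l := by
      rw [mul_comm, exp_mul]
      gcongr
    calc u = exp (-(l * ε)) * (u * exp (l * ε)) := by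
          rw [mul_left_comm, ← exp_add, neg_add_cancel, exp_zero, mul_one]
      _ ≤ exp (-(l * ε)) * (u * (u / v) ^ l) := by gcongr
      _ ≤ exp ε * v + exp (-(l * ε)) * (u * (u / v) ^ l) := le_add_of_nonneg_left (by positivity)

lemma withDensity_le_add_renyiMoment (hf : ∀ x, 0 ≤ f x) (hf'm : Measurable f')
    (hf' : ∀ x, 0 < f' x) {l : ℝ} (hl : 0 ≤ l) (ε : ℝ) {E : Set α} (hE : MeasurableSet E) :
    μ.withDensity (fun x => ENNReal.ofReal (f x)) E ≤
      ENNReal.ofReal (exp ε) * μ.withDensity (fun x => ENNReal.ofReal (f' x)) E +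
        ENNReal.ofReal (exp (-(l * ε))) * renyiMoment μ f f' l := by
  have hpointwise (x : α) : ENNReal.ofReal (f x) ≤
      ENNReal.ofReal (exp ε) * ENNReal.ofReal (f' x) +
        ENNReal.ofReal (exp (-(l * ε))) * ENNReal.ofReal (f x * (f x / f' x) ^ l) := by
    rw [← ENNReal.ofReal_mul (exp_nonneg _), ← ENNReal.ofReal_mul (exp_nonneg _)]
    exact (ENNReal.ofReal_le_ofReal
      (le_exp_mul_add_exp_neg_mul_rpow_div (hf x) (hf' x) hl ε)).trans ENNReal.ofReal_add_le
  rw [withDensity_apply _ hE, withDensity_apply _ hE]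
  refine (lintegral_mono hpointwise).trans ?_
  rw [lintegral_add_left (hf'm.ennreal_ofReal.const_mul _),
    lintegral_const_mul' _ _ ENNReal.ofReal_ne_top, lintegral_const_mul' _ _ ENNReal.ofReal_ne_top]
  gcongr
  exact setLIntegral_le_lintegral _ _

lemma withDensity_le_of_renyiMoment_le_of_pos (hf : ∀ x, 0 ≤ f x) (hf'm : Measurable f')
    (hf' : ∀ x, 0 < f' x) {a v : ℝ} (hv : 0 < v)
    (hmoment : ∀ l, 0 ≤ l →
      renyiMoment μ f f' l ≤ ENNReal.ofReal (exp (l * a + l ^ 2 * v / 2)))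
    {δ : ℝ} (hδ : δ ∈ Set.Ioc 0 1) {E : Set α} (hE : MeasurableSet E) :
    μ.withDensity (fun x => ENNReal.ofReal (f x)) E ≤
      ENNReal.ofReal (exp (a + √(2 * v * log (1 / δ)))) *
          μ.withDensity (fun x => ENNReal.ofReal (f' x)) E +
        ENNReal.ofReal δ := by
  have hlog : 0 ≤ log (1 / δ) := log_nonneg (one_le_one_div hδ.1 hδ.2)
  set s := √(2 * v * log (1 / δ))
  -- `s / v` minimizes the exponent `l ^ 2 * v / 2 - l * s` of Chernoff's bound.
  have hexponent : -(s / v * (a + s)) + (s / v * a + (s / v) ^ 2 * v / 2) = log δ := by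
    have hs : s ^ 2 = 2 * v * log (1 / δ) := sq_sqrt (by positivity)
    calc _ = -(s ^ 2 / (2 * v)) := by field_simp; ring
      _ = log δ := by rw [hs, mul_div_cancel_left₀ _ (by positivity), one_div, log_inv, neg_neg]
  refine (withDensity_le_add_renyiMoment hf hf'm hf' (l := s / v) (by positivity) (a + s)
    hE).trans ?_
  gcongr
  refine (mul_le_mul_right (hmoment _ (by positivity)) _).trans_eq ?_
  rw [← ENNReal.ofReal_mul (exp_nonneg _), ← exp_add, hexponent, exp_log hδ.1]

lemma withDensity_le_of_renyiMoment_le (hf : ∀ x, 0 ≤ f x) (hf'm : Measurable f')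
    (hf' : ∀ x, 0 < f' x) {a v : ℝ} (hv : 0 ≤ v)
    (hmoment : ∀ l, 0 ≤ l →
      renyiMoment μ f f' l ≤ ENNReal.ofReal (exp (l * a + l ^ 2 * v / 2)))
    {δ : ℝ} (hδ : δ ∈ Set.Ioc 0 1) {E : Set α} (hE : MeasurableSet E) :
    μ.withDensity (fun x => ENNReal.ofReal (f x)) E ≤
      ENNReal.ofReal (exp (a + √(2 * v * log (1 / δ)))) *
          μ.withDensity (fun x => ENNReal.ofReal (f' x)) E +
        ENNReal.ofReal δ := by
  -- For `v = 0` no finite `l` is optimal in Chernoff's bound, so `v` is approached from above.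
  have hcont : Continuous fun w => ENNReal.ofReal (exp (a + √(2 * w * log (1 / δ)))) :=
    ENNReal.continuous_ofReal.comp (by fun_prop)
  have hlim : Filter.Tendsto
      (fun w => ENNReal.ofReal (exp (a + √(2 * w * log (1 / δ)))) *
          μ.withDensity (fun x => ENNReal.ofReal (f' x)) E + ENNReal.ofReal δ) (𝓝[>] v)
      (𝓝 (ENNReal.ofReal (exp (a + √(2 * v * log (1 / δ)))) *
          μ.withDensity (fun x => ENNReal.ofReal (f' x)) E + ENNReal.ofReal δ)) :=
    (ENNReal.Tendsto.mul_const (hcont.continuousWithinAt (s := Set.Ioi v))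
      (.inl (ENNReal.ofReal_pos.2 (exp_pos _)).ne')).add_const _
  refine ge_of_tendsto hlim (Filter.eventually_of_mem self_mem_nhdsWithin fun w hw => ?_)
  refine withDensity_le_of_renyiMoment_le_of_pos hf hf'm hf' (hv.trans_lt hw)
    (fun l hl => (hmoment l hl).trans ?_) hδ hE
  have hvw : v ≤ w := le_of_lt hw
  gcongr

end LikelihoodRatio

section BoundedLoss

lemma le_mul_exp_sub_one_add_one_sub_exp_neg {x c : ℝ} (h : |x| ≤ c) :
    x ≤ c * (exp c - 1) + 1 - exp (-x) := by
  have hleft : exp (-x) * (1 + x) ≤ 1 := by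
    calc exp (-x) * (1 + x) ≤ exp (-x) * exp x := by
          gcongr
          linarith [add_one_le_exp x]
      _ = 1 := by rw [← exp_add, neg_add_cancel, exp_zero]
  have hmiddle : x * (1 - exp (-x)) ≤ |x| * (exp |x| - 1) := by
    rcases le_total 0 x with hx | hx
    · rw [abs_of_nonneg hx]
      gcongr ?_ * ?_
      linarith [add_one_le_exp x, add_one_le_exp (-x)]
    · rw [abs_of_nonpos hx]
      exact le_of_eq (by ring)
  have hright : |x| * (exp |x| - 1) ≤ c * (exp c - 1) := by
    have hexp : 0 ≤ exp |x| - 1 := sub_nonneg.2 (one_le_exp (abs_nonneg x))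
    have hc : 0 ≤ c := (abs_nonneg x).trans h
    gcongr
  linarith

variable {Ω : Type*} [MeasurableSpace Ω] {P : Measure Ω} [IsProbabilityMeasure P]
  {Y : Ω → ℝ} {c : ℝ}

lemma integral_le_mul_exp_sub_one (hYm : Measurable Y) (hYc : ∀ ω, |Y ω| ≤ c)
    (hY : 1 ≤ ∫ ω, exp (-Y ω) ∂P) : ∫ ω, Y ω ∂P ≤ c * (exp c - 1) := by
  have hYint : Integrable Y P :=
    .of_mem_Icc (-c) c hYm.aemeasurable (.of_forall fun ω => abs_le.1 (hYc ω))
  have hexpint : Integrable (fun ω => exp (-Y ω)) P := by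
    by_contra hnot
    rw [integral_undef hnot] at hY
    linarith
  calc ∫ ω, Y ω ∂P ≤ ∫ ω, (c * (exp c - 1) + 1 - exp (-Y ω)) ∂P :=
        integral_mono hYint ((integrable_const _).sub hexpint) fun ω =>
          le_mul_exp_sub_one_add_one_sub_exp_neg (hYc ω)
    _ = c * (exp c - 1) + 1 - ∫ ω, exp (-Y ω) ∂P := by
        rw [integral_sub (integrable_const _) hexpint, integral_const, probReal_univ, one_smul]
    _ ≤ c * (exp c - 1) := by linarith

lemma mgf_le_of_abs_le_of_one_le_integral_exp_neg (hYm : Measurable Y) (hYc : ∀ ω, |Y ω| ≤ c)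
    (hY : 1 ≤ ∫ ω, exp (-Y ω) ∂P) {l : ℝ} (hl : 0 ≤ l) :
    mgf Y P l ≤ exp (l * (c * (exp c - 1)) + l ^ 2 * c ^ 2 / 2) := by
  have hvariance : (((‖c - -c‖₊ / 2) ^ 2 : NNReal) : ℝ) = c ^ 2 := by
    rw [sub_neg_eq_add, ← two_mul]
    simp
  have hcentered : mgf (fun ω => Y ω - ∫ ω, Y ω ∂P) P l ≤ exp (c ^ 2 * l ^ 2 / 2) := by
    have hoeffding := (hasSubgaussianMGF_of_mem_Icc hYm.aemeasurable
      (.of_forall fun ω => abs_le.1 (hYc ω)) : HasSubgaussianMGF _ _ P).mgf_le l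
    rwa [hvariance] at hoeffding
  calc mgf Y P l = mgf (fun ω => (Y ω - ∫ ω, Y ω ∂P) + ∫ ω, Y ω ∂P) P l := by
        simp only [sub_add_cancel]
    _ = mgf (fun ω => Y ω - ∫ ω, Y ω ∂P) P l * exp (l * ∫ ω, Y ω ∂P) := mgf_add_const _
    _ ≤ exp (c ^ 2 * l ^ 2 / 2) * exp (l * (c * (exp c - 1))) := by
        gcongr
        exact integral_le_mul_exp_sub_one hYm hYc hY
    _ = exp (l * (c * (exp c - 1)) + l ^ 2 * c ^ 2 / 2) := by
        rw [← exp_add]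
        ring_nf

end BoundedLoss

section BoundedRatio

variable {α : Type*} [MeasurableSpace α] {μ : Measure α} {f f' : α → ℝ} {c : ℝ}

lemma abs_log_div_le {u v : ℝ} (hu : 0 < u) (hv : 0 < v) (huv : u ≤ exp c * v)
    (hvu : v ≤ exp c * u) : |log (u / v)| ≤ c := by
  rw [log_div hu.ne' hv.ne', abs_sub_le_iff]
  constructor
  · have := log_le_log hu huv
    rw [log_mul (exp_ne_zero c) hv.ne', log_exp] at this
    linarith
  · have := log_le_log hv hvu
    rw [log_mul (exp_ne_zero c) hu.ne', log_exp] at this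
    linarith

lemma isProbabilityMeasure_withDensity_ofReal (hf : ∀ x, 0 ≤ f x) (hf1 : ∫ x, f x ∂μ = 1) :
    IsProbabilityMeasure (μ.withDensity fun x => ENNReal.ofReal (f x)) := by
  constructor
  rw [withDensity_apply _ .univ, Measure.restrict_univ,
    ← ofReal_integral_eq_lintegral_ofReal (integrable_of_integral_eq_one hf1) (.of_forall hf), hf1,
    ENNReal.ofReal_one]

lemma integral_exp_neg_log_div_withDensity (hfm : Measurable f) (hf : ∀ x, 0 < f x)
    (hf' : ∀ x, 0 < f' x) :
    ∫ x, exp (-log (f x / f' x)) ∂μ.withDensity (fun x => ENNReal.ofReal (f x)) =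
      ∫ x, f' x ∂μ := by
  rw [integral_withDensity_eq_integral_toReal_smul hfm.ennreal_ofReal
    (.of_forall fun _ => ENNReal.ofReal_lt_top)]
  refine integral_congr_ae (.of_forall fun x => ?_)
  have hx := hf x
  have hx' := hf' x
  simp only [smul_eq_mul]
  rw [ENNReal.toReal_ofReal hx.le, exp_neg, exp_log (by positivity)]
  field_simp

lemma renyiMoment_eq_lintegral_withDensity (hfm : Measurable f) (hf'm : Measurable f')
    (hf : ∀ x, 0 < f x) (hf' : ∀ x, 0 < f' x) (l : ℝ) :
    renyiMoment μ f f' l = ∫⁻ x, ENNReal.ofReal (exp (l * log (f x / f' x)))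
      ∂μ.withDensity (fun x => ENNReal.ofReal (f x)) := by
  rw [lintegral_withDensity_eq_lintegral_mul _ hfm.ennreal_ofReal (by fun_prop)]
  refine lintegral_congr fun x => ?_
  rw [Pi.mul_apply, ← ENNReal.ofReal_mul (hf x).le, rpow_def_of_pos (div_pos (hf x) (hf' x)),
    mul_comm l]

lemma renyiMoment_le_of_le_exp_mul (hfm : Measurable f) (hf'm : Measurable f')
    (hf : ∀ x, 0 < f x) (hf' : ∀ x, 0 < f' x) (hf1 : ∫ x, f x ∂μ = 1) (hf'1 : ∫ x, f' x ∂μ = 1)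
    (hff' : ∀ x, f x ≤ exp c * f' x) (hf'f : ∀ x, f' x ≤ exp c * f x) {l : ℝ} (hl : 0 ≤ l) :
    renyiMoment μ f f' l ≤
      ENNReal.ofReal (exp (l * (c * (exp c - 1)) + l ^ 2 * c ^ 2 / 2)) := by
  have := isProbabilityMeasure_withDensity_ofReal (fun x => (hf x).le) hf1
  set P := μ.withDensity fun x => ENNReal.ofReal (f x)
  have hlossm : Measurable fun x => log (f x / f' x) := by fun_prop
  have hloss (x : α) : |log (f x / f' x)| ≤ c := abs_log_div_le (hf x) (hf' x) (hff' x) (hf'f x)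
  have hmgfint : Integrable (fun x => exp (l * log (f x / f' x))) P :=
    integrable_exp_mul_of_mem_Icc hlossm.aemeasurable (.of_forall fun x => abs_le.1 (hloss x))
  rw [renyiMoment_eq_lintegral_withDensity hfm hf'm hf hf',
    ← ofReal_integral_eq_lintegral_ofReal hmgfint (.of_forall fun _ => exp_nonneg _)]
  exact ENNReal.ofReal_le_ofReal <| mgf_le_of_abs_le_of_one_le_integral_exp_neg hlossm hloss
    (integral_exp_neg_log_div_withDensity hfm hf hf' ▸ hf'1.ge) hl

end BoundedRatio

section Composition

variable {α : Type*} {T : ℕ}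

/-- The product of `F t` over the transitions of the path `x₀, θ 0, …, θ (T - 1)`. When `F t x` is a
conditional density given `x`, this is the joint density of the Markov chain started at `x₀`. The
entry `t.castSucc` of the extended path is the state preceding `θ t`. -/
def pathProd {M : Type*} [CommMonoid M] (F : Fin T → α → α → M) (x₀ : α) (θ : Fin T → α) : M :=
  ∏ t : Fin T, F t ((Fin.cons x₀ θ : Fin (T + 1) → α) t.castSucc) (θ t)

lemma pathProd_cons {M : Type*} [CommMonoid M] (F : Fin (T + 1) → α → α → M) (x₀ x : α)
    (θ : Fin T → α) :
    pathProd F x₀ (Fin.cons x θ : Fin (T + 1) → α) =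
      F 0 x₀ x * pathProd (fun t => F t.succ) x θ := by
  simp only [pathProd, Fin.prod_univ_succ, Fin.castSucc_zero, Fin.castSucc_succ, Fin.cons_zero,
    Fin.cons_succ]

lemma ofReal_pathProd {F : Fin T → α → α → ℝ} (hF : ∀ t x y, 0 ≤ F t x y) (x₀ : α)
    (θ : Fin T → α) :
    ENNReal.ofReal (pathProd F x₀ θ) =
      pathProd (fun t x y => ENNReal.ofReal (F t x y)) x₀ θ :=
  ENNReal.ofReal_prod_of_nonneg fun _ _ => hF _ _ _

lemma pathProd_mul_div_rpow {f f' : Fin T → α → α → ℝ} (hf : ∀ t x y, 0 ≤ f t x y)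
    (hf' : ∀ t x y, 0 ≤ f' t x y) (x₀ : α) (θ : Fin T → α) (l : ℝ) :
    pathProd f x₀ θ * (pathProd f x₀ θ / pathProd f' x₀ θ) ^ l =
      pathProd (fun t x y => f t x y * (f t x y / f' t x y) ^ l) x₀ θ := by
  simp only [pathProd]
  rw [Finset.prod_mul_distrib,
    Real.finsetProd_rpow _ _ fun _ _ => div_nonneg (hf _ _ _) (hf' _ _ _), Finset.prod_div_distrib]

variable [MeasurableSpace α]

lemma coe_piFinSuccAbove_zero_symm :
    ⇑(MeasurableEquiv.piFinSuccAbove (fun _ : Fin (T + 1) => α) 0).symm =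
      fun r => Fin.cons r.1 r.2 :=
  funext fun _ => Fin.insertNth_zero' _ _

lemma measurable_fin_cons :
    Measurable fun r : α × (Fin T → α) => (Fin.cons r.1 r.2 : Fin (T + 1) → α) := by
  rw [← coe_piFinSuccAbove_zero_symm]
  exact MeasurableEquiv.measurable _

lemma measurable_uncurry_pathProd {M : Type*} [CommMonoid M] [MeasurableSpace M]
    [MeasurableMul₂ M] {F : Fin T → α → α → M} (hF : ∀ t, Measurable (Function.uncurry (F t))) :
    Measurable (Function.uncurry (pathProd F)) := by
  simp only [Function.uncurry_def, pathProd]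
  refine Finset.measurable_fun_prod _ fun t _ => (hF t).comp (Measurable.prodMk ?_ ?_)
  · exact (measurable_pi_apply t.castSucc).comp measurable_fin_cons
  · exact (measurable_pi_apply t).comp measurable_snd

variable {μ : Measure α} [SigmaFinite μ]

lemma lintegral_pi_fin_succ {F : (Fin (T + 1) → α) → ℝ≥0∞} (hF : Measurable F) :
    ∫⁻ θ, F θ ∂Measure.pi (fun _ => μ) =
      ∫⁻ x, ∫⁻ θ, F (Fin.cons x θ) ∂Measure.pi (fun _ => μ) ∂μ := by
  have hsplit := (measurePreserving_piFinSuccAbove (fun _ : Fin (T + 1) => μ) 0).symm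
  rw [← hsplit.lintegral_comp hF]
  simp only [coe_piFinSuccAbove_zero_symm]
  exact lintegral_prod _ (hF.comp measurable_fin_cons).aemeasurable

lemma lintegral_pathProd_le {F : Fin T → α → α → ℝ≥0∞}
    (hFm : ∀ t, Measurable (Function.uncurry (F t))) {C : Fin T → ℝ≥0∞}
    (hF : ∀ t x, ∫⁻ y, F t x y ∂μ ≤ C t) (x₀ : α) :
    ∫⁻ θ, pathProd F x₀ θ ∂Measure.pi (fun _ => μ) ≤ ∏ t, C t := by
  induction T generalizing x₀ with
  | zero => simp [pathProd]
  | succ T ih =>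
    have htail := measurable_uncurry_pathProd fun t : Fin T => hFm t.succ
    rw [lintegral_pi_fin_succ (measurable_uncurry_pathProd hFm).of_uncurry_left]
    simp only [pathProd_cons]
    calc ∫⁻ x, ∫⁻ θ, F 0 x₀ x * pathProd (fun t => F t.succ) x θ ∂Measure.pi (fun _ => μ) ∂μ
        = ∫⁻ x, F 0 x₀ x * ∫⁻ θ, pathProd (fun t => F t.succ) x θ ∂Measure.pi (fun _ => μ) ∂μ :=
          lintegral_congr fun x => lintegral_const_mul _ htail.of_uncurry_left
      _ ≤ ∫⁻ x, F 0 x₀ x * ∏ t : Fin T, C t.succ ∂μ := by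
          gcongr with x
          exact ih (fun t => hFm t.succ) (fun t => hF t.succ) x
      _ = (∫⁻ x, F 0 x₀ x ∂μ) * ∏ t : Fin T, C t.succ :=
          lintegral_mul_const _ (hFm 0).of_uncurry_left
      _ ≤ C 0 * ∏ t : Fin T, C t.succ := by
          gcongr
          exact hF 0 x₀
      _ = ∏ t, C t := (Fin.prod_univ_succ C).symm

variable {f f' : Fin T → α → α → ℝ}

lemma renyiMoment_pathProd_le (hfm : ∀ t, Measurable (Function.uncurry (f t)))
    (hf'm : ∀ t, Measurable (Function.uncurry (f' t))) (hf : ∀ t x y, 0 ≤ f t x y)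
    (hf' : ∀ t x y, 0 ≤ f' t x y) {l : ℝ} {C : Fin T → ℝ≥0∞}
    (hmoment : ∀ t x, renyiMoment μ (f t x) (f' t x) l ≤ C t) (x₀ : α) :
    renyiMoment (Measure.pi fun _ => μ) (pathProd f x₀) (pathProd f' x₀) l ≤ ∏ t, C t := by
  have hterm (t : Fin T) (x y : α) : 0 ≤ f t x y * (f t x y / f' t x y) ^ l :=
    mul_nonneg (hf t x y) (rpow_nonneg (div_nonneg (hf t x y) (hf' t x y)) l)
  simp only [renyiMoment, pathProd_mul_div_rpow hf hf', ofReal_pathProd hterm]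
  refine lintegral_pathProd_le (fun t => ?_) hmoment x₀
  exact ((hfm t).mul (((hfm t).div (hf'm t)).pow_const l)).ennreal_ofReal

theorem withDensity_pathProd_le (hfm : ∀ t, Measurable (Function.uncurry (f t)))
    (hf'm : ∀ t, Measurable (Function.uncurry (f' t))) (hf : ∀ t x y, 0 < f t x y)
    (hf' : ∀ t x y, 0 < f' t x y) (hf1 : ∀ t x, ∫ y, f t x y ∂μ = 1)
    (hf'1 : ∀ t x, ∫ y, f' t x y ∂μ = 1) {c : ℝ} (hc : 0 ≤ c)
    (hff' : ∀ t x y, f t x y ≤ exp c * f' t x y) (hf'f : ∀ t x y, f' t x y ≤ exp c * f t x y)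
    {δ : ℝ} (hδ : δ ∈ Set.Ioc 0 1) (x₀ : α) {E : Set (Fin T → α)} (hE : MeasurableSet E) :
    (Measure.pi fun _ => μ).withDensity (fun θ => ENNReal.ofReal (pathProd f x₀ θ)) E ≤
      ENNReal.ofReal (exp (c * √(2 * T * log (1 / δ)) + T * c * (exp c - 1))) *
          (Measure.pi fun _ => μ).withDensity (fun θ => ENNReal.ofReal (pathProd f' x₀ θ)) E +
        ENNReal.ofReal δ := by
  have hmoment (l : ℝ) (hl : 0 ≤ l) :
      renyiMoment (Measure.pi fun _ => μ) (pathProd f x₀) (pathProd f' x₀) l ≤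
        ENNReal.ofReal (exp (l * (T * c * (exp c - 1)) + l ^ 2 * (T * c ^ 2) / 2)) := by
    refine (renyiMoment_pathProd_le hfm hf'm (fun t x y => (hf t x y).le)
      (fun t x y => (hf' t x y).le) (fun t x => renyiMoment_le_of_le_exp_mul
        (hfm t).of_uncurry_left (hf'm t).of_uncurry_left (hf t x) (hf' t x) (hf1 t x) (hf'1 t x)
        (hff' t x) (hf'f t x) hl) x₀).trans_eq ?_
    rw [Finset.prod_const, Finset.card_univ, Fintype.card_fin,
      ← ENNReal.ofReal_pow (exp_nonneg _), ← exp_nat_mul]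
    ring_nf
  have hε : T * c * (exp c - 1) + √(2 * (T * c ^ 2) * log (1 / δ)) =
      c * √(2 * T * log (1 / δ)) + T * c * (exp c - 1) := by
    rw [add_comm, show 2 * (T * c ^ 2) * log (1 / δ) = c ^ 2 * (2 * T * log (1 / δ)) by ring,
      sqrt_mul (sq_nonneg c), sqrt_sq hc]
  rw [← hε]
  exact withDensity_le_of_renyiMoment_le
    (fun θ => Finset.prod_nonneg fun t _ => (hf t _ _).le)
    (measurable_uncurry_pathProd hf'm).of_uncurry_left
    (fun θ => Finset.prod_pos fun t _ => hf' t _ _) (by positivity) hmoment hδ hE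

end Composition

section Laplace

variable {d : ℕ} {b : ℝ}

lemma lapDensity_pos (hb : 0 < b) (m x : Fin d → ℝ) : 0 < lapDensity d m b x := by
  unfold lapDensity
  positivity

lemma lapDensity_eq_prod (m x : Fin d → ℝ) :
    lapDensity d m b x = ∏ i, (2 * b)⁻¹ * exp (-|x i - m i| / b) := by
  rw [lapDensity, Finset.prod_mul_distrib, ← exp_sum, Finset.prod_const, Finset.card_univ,
    Fintype.card_fin, inv_pow, ← Finset.sum_div, Finset.sum_neg_distrib]

lemma integral_exp_neg_abs_sub_div (hb : 0 < b) (m : ℝ) :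
    ∫ x : ℝ, exp (-|x - m| / b) = 2 * b := by
  calc ∫ x : ℝ, exp (-|x - m| / b) = ∫ x : ℝ, exp (-|x| / b) :=
        integral_sub_right_eq_self (fun x : ℝ => exp (-|x| / b)) m
    _ = 2 * ∫ x in Set.Ioi (0 : ℝ), exp (-x / b) :=
        integral_comp_abs (f := fun x => exp (-x / b))
    _ = 2 * ∫ x in Set.Ioi (0 : ℝ), exp (-b⁻¹ * x) := by
        simp only [div_eq_inv_mul, neg_mul, mul_neg]
    _ = 2 * b := by
        rw [integral_exp_mul_Ioi (neg_neg_of_pos (inv_pos.2 hb))]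
        simp

lemma integral_lapDensity (hb : 0 < b) (m : Fin d → ℝ) : ∫ x, lapDensity d m b x = 1 := by
  simp only [lapDensity_eq_prod]
  rw [integral_fintype_prod_volume_eq_prod fun i (x : ℝ) => (2 * b)⁻¹ * exp (-|x - m i| / b)]
  refine Finset.prod_eq_one fun i _ => ?_
  rw [integral_const_mul, integral_exp_neg_abs_sub_div hb, inv_mul_cancel₀ (by positivity)]

lemma lapDensity_le_exp_mul (hb : 0 < b) {c : ℝ} {m m' : Fin d → ℝ}
    (hc : ∑ i, |m i - m' i| ≤ c * b) (x : Fin d → ℝ) :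
    lapDensity d m b x ≤ exp c * lapDensity d m' b x := by
  have htriangle : ∑ i, |x i - m' i| ≤ ∑ i, |x i - m i| + ∑ i, |m i - m' i| := by
    rw [← Finset.sum_add_distrib]
    exact Finset.sum_le_sum fun i _ => abs_sub_le _ _ _
  have hexponent : -(∑ i, |x i - m i|) / b ≤ c + -(∑ i, |x i - m' i|) / b := by
    rw [div_le_iff₀ hb, add_mul, div_mul_cancel₀ _ hb.ne']
    linarith
  rw [lapDensity, lapDensity, mul_left_comm, ← exp_add]
  gcongr

end Laplace

section GradientStep

variable {p : ℕ} {η b : ℝ}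

/-- The conditional density, in the variable `y`, of the step `y = x - η * G` of noisy gradient
descent from `x`, where `G` is Laplace distributed with mean `m` and scale `b`. -/
noncomputable def stepDensity (η b : ℝ) (m x y : Fin p → ℝ) : ℝ :=
  (η ^ p)⁻¹ * lapDensity p m b fun i => (x i - y i) / η

lemma stepDensity_pos (hη : 0 < η) (hb : 0 < b) (m x y : Fin p → ℝ) :
    0 < stepDensity η b m x y :=
  mul_pos (by positivity) (lapDensity_pos hb _ _)

lemma measurable_stepDensity {α : Type*} [MeasurableSpace α] {m x y : α → Fin p → ℝ}
    (hm : Measurable m) (hx : Measurable x) (hy : Measurable y) :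
    Measurable fun a => stepDensity η b (m a) (x a) (y a) := by
  unfold stepDensity lapDensity
  fun_prop

lemma integral_comp_sub_div (hη : 0 < η) (f : (Fin p → ℝ) → ℝ) (x : Fin p → ℝ) :
    ∫ y : Fin p → ℝ, f (fun i => (x i - y i) / η) = η ^ p * ∫ y, f y := by
  calc ∫ y : Fin p → ℝ, f (fun i => (x i - y i) / η) = ∫ y, f (η⁻¹ • (x - y)) := by
        simp only [div_eq_inv_mul]
        rfl
    _ = ∫ y, f (η⁻¹ • y) := integral_sub_left_eq_self (fun y => f (η⁻¹ • y)) volume x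
    _ = η ^ p * ∫ y, f y := by
        rw [Measure.integral_comp_inv_smul_of_nonneg volume f hη.le, Module.finrank_fin_fun,
          smul_eq_mul]

lemma integral_stepDensity (hη : 0 < η) (hb : 0 < b) (m x : Fin p → ℝ) :
    ∫ y, stepDensity η b m x y = 1 := by
  simp only [stepDensity]
  rw [integral_const_mul, integral_comp_sub_div hη, integral_lapDensity hb, mul_one,
    inv_mul_cancel₀ (by positivity)]

lemma stepDensity_le_exp_mul (hη : 0 < η) (hb : 0 < b) {c : ℝ} {m m' : Fin p → ℝ}
    (hc : ∑ i, |m i - m' i| ≤ c * b) (x y : Fin p → ℝ) :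
    stepDensity η b m x y ≤ exp c * stepDensity η b m' x y := by
  rw [stepDensity, stepDensity, mul_left_comm]
  gcongr
  exact lapDensity_le_exp_mul hb hc _

end GradientStep

section NoisySGD

variable {Z : Type*} {N p T : ℕ} {g : (Fin p → ℝ) → Z → Fin p → ℝ}

lemma Neighboring.symm {S S' : Fin N → Z} (h : Neighboring S S') : Neighboring S' S :=
  h.imp fun _ hk j hj => (hk j hj).symm

lemma measurable_avgGrad (hg : ∀ z, Measurable fun θ => g θ z) (S : Fin N → Z) :
    Measurable fun θ => avgGrad g θ S := by
  unfold avgGrad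
  fun_prop

lemma sum_abs_avgGrad_sub_le {Δ : ℝ} {θ : Fin p → ℝ}
    (hΔ : ∀ z z', ∑ i, |g θ z i - g θ z' i| ≤ Δ) {S S' : Fin N → Z} (h : Neighboring S S') :
    ∑ i, |avgGrad g θ S i - avgGrad g θ S' i| ≤ Δ / N := by
  obtain ⟨k, hk⟩ := h
  have hcoord (i : Fin p) :
      |avgGrad g θ S i - avgGrad g θ S' i| = |g θ (S k) i - g θ (S' k) i| / N := by
    simp only [avgGrad]
    rw [← sub_div, abs_div, Nat.abs_cast, ← Finset.sum_sub_distrib,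
      Finset.sum_eq_single_of_mem k (Finset.mem_univ k)]
    intro j _ hj
    rw [hk j hj, sub_self]
  simp only [hcoord, ← Finset.sum_div]
  gcongr
  exact hΔ _ _

lemma sum_abs_sub_le_add {ι : Type*} (s : Finset ι) (u v : ι → ℝ) :
    ∑ i ∈ s, |u i - v i| ≤ ∑ i ∈ s, |u i| + ∑ i ∈ s, |v i| := by
  rw [← Finset.sum_add_distrib]
  exact Finset.sum_le_sum fun i _ => abs_sub _ _

lemma prevIter_eq_cons (θ₀ : Fin p → ℝ) (θ : Fin T → Fin p → ℝ) (t : Fin T) :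
    prevIter θ₀ θ t = (Fin.cons θ₀ θ : Fin (T + 1) → Fin p → ℝ) t.castSucc := by
  obtain ⟨_ | k, hk⟩ := t <;> rfl

lemma sgdDensity_eq_pathProd (θ₀ : Fin p → ℝ) (η : Fin T → ℝ) (b : ℝ) (S : Fin N → Z)
    (θ : Fin T → Fin p → ℝ) :
    sgdDensity p N T g θ₀ η b S θ =
      pathProd (fun t x y => stepDensity (η t) b (avgGrad g x S) x y) θ₀ θ := by
  simp only [sgdDensity, pathProd, stepDensity, prevIter_eq_cons]

theorem stmt1_general [MeasurableSpace Z] {b : ℝ} (hb : 0 < b) {Δ : ℝ}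
    (hg : ∀ z, Measurable fun θ => g θ z) (hΔ : ∀ θ z z', ∑ i, |g θ z i - g θ z' i| ≤ Δ)
    (θ₀ : Fin p → ℝ) {η : Fin T → ℝ} (hη : ∀ t, 0 < η t) {δ : ℝ} (hδ : δ ∈ Set.Ioc 0 1) :
    IsDP (sgdMeasure p N T g θ₀ η b)
      (Δ / (N * b) * √(2 * T * log (1 / δ)) + T * (Δ / (N * b)) * (exp (Δ / (N * b)) - 1)) δ := by
  intro S S' hS E hE
  have hstepm (S : Fin N → Z) (t : Fin T) :
      Measurable (Function.uncurry fun x y => stepDensity (η t) b (avgGrad g x S) x y) :=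
    measurable_stepDensity ((measurable_avgGrad hg S).comp measurable_fst) measurable_fst
      measurable_snd
  have hsens {S S' : Fin N → Z} (h : Neighboring S S') (θ : Fin p → ℝ) :
      ∑ i, |avgGrad g θ S i - avgGrad g θ S' i| ≤ Δ / (N * b) * b := by
    rw [← div_div, div_mul_cancel₀ _ hb.ne']
    exact sum_abs_avgGrad_sub_le (hΔ θ) h
  have hε₀ : 0 ≤ Δ / (N * b) :=
    nonneg_of_mul_nonneg_left ((Finset.sum_nonneg fun _ _ => abs_nonneg _).trans (hsens hS θ₀)) hb
  simp only [sgdMeasure, sgdDensity_eq_pathProd]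
  exact withDensity_pathProd_le (hstepm S) (hstepm S')
    (fun t _ _ => stepDensity_pos (hη t) hb _ _ _) (fun t _ _ => stepDensity_pos (hη t) hb _ _ _)
    (fun t _ => integral_stepDensity (hη t) hb _ _) (fun t _ => integral_stepDensity (hη t) hb _ _)
    hε₀ (fun t x => stepDensity_le_exp_mul (hη t) hb (hsens hS x) x)
    (fun t x => stepDensity_le_exp_mul (hη t) hb (hsens hS.symm x) x) hδ θ₀ hE

end NoisySGD

/-- the noisy adversarial SGD kernel, with `T` iterations, noise
scale `b > 0` and per-sample gradient map `g` of ℓ1-norm at most `L_adv`, is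
`(ε, δ)`-differentially private with `ε = ε₀·√(2·T·log(N/δ')) + T·ε₀·(e^{ε₀}−1)`,
`δ = δ'/N` and `ε₀ = 2·L_adv/(N·b)`, for every `δ' ∈ (0,1)`. -/
theorem stmt1 {Z : Type*} [MeasurableSpace Z] (N p T : ℕ)
    (hN : 1 ≤ N) (hp : 1 ≤ p) (hT : 1 ≤ T)
    (b : ℝ) (hb : 0 < b) (Ladv : ℝ)
    (g : (Fin p → ℝ) → Z → Fin p → ℝ)
    (hg : Measurable (fun q : (Fin p → ℝ) × Z => g q.1 q.2))
    (hL : ∀ θ z, ∑ i, |g θ z i| ≤ Ladv)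
    (θ₀ : Fin p → ℝ) (η : Fin T → ℝ) (hη : ∀ t, 0 < η t)
    (δ' : ℝ) (hδ' : δ' ∈ Set.Ioo (0 : ℝ) 1) :
    IsDP (sgdMeasure p N T g θ₀ η b)
      (2 * Ladv / (N * b) * Real.sqrt (2 * T * Real.log (N / δ')) +
        T * (2 * Ladv / (N * b)) * (Real.exp (2 * Ladv / (N * b)) - 1))
      (δ' / N) := by
  have hN' : (1 : ℝ) ≤ N := Nat.one_le_cast.2 hN
  have hdiam (θ : Fin p → ℝ) (z z' : Z) : ∑ i, |g θ z i - g θ z' i| ≤ 2 * Ladv :=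
    (sum_abs_sub_le_add _ _ _).trans (by linarith [hL θ z, hL θ z'])
  have hδ : δ' / N ∈ Set.Ioc (0 : ℝ) 1 :=
    ⟨div_pos hδ'.1 (by linarith), (div_le_one (by linarith)).2 (by linarith [hδ'.2])⟩
  have hgz (z : Z) : Measurable fun θ => g θ z := hg.comp measurable_prodMk_right
  simpa only [one_div_div] using stmt1_general hb hgz hdiam θ₀ hη hδ
end

section
/- (KL bound for pure differential privacy, the source of the T·ε₀·(e^{ε₀} − 1) term in the strong composition formula.) Let P and Q be probability measures on a measurable space X and let ε₀ ≥ 0. Suppose that for every measurable set E ⊆ X, P(E) ≤ e^{ε₀}·Q(E) and Q(E) ≤ e^{ε₀}·P(E). Then the Kullback–Leibler divergence satisfies KL(P ‖ Q) ≤ ε₀·(e^{ε₀} − 1). -/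
open MeasureTheory

/-!
Write `y = dP/dQ`. As `log y ≤ y - 1`, the integrand `y log y + 1 - y` of the divergence against `Q`
is at most `(y - 1) log y`, the integrand of the symmetrized divergence `KL(P‖Q) + KL(Q‖P)`.
The two-sided hypothesis bounds both of its factors, `|log y| ≤ ε₀` and
`|y - 1| ≤ exp ε₀ - 1`, whereas bounding `log y` alone would only give `KL(P‖Q) ≤ ε₀`.
-/

open InformationTheory
open scoped ENNReal

section RealInequalities

theorem klFun_le_sub_one_mul_log {y : ℝ} (hy : 0 < y) : klFun y ≤ (y - 1) * Real.log y := by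
  rw [klFun_apply]
  linarith [Real.log_le_sub_one_of_pos hy]

theorem abs_exp_sub_one_le_exp_abs_sub_one (t : ℝ) : |Real.exp t - 1| ≤ Real.exp |t| - 1 := by
  have exp_le : Real.exp t ≤ Real.exp |t| := Real.exp_le_exp.2 (le_abs_self t)
  have two_le : 2 ≤ Real.exp t + Real.exp |t| := by
    linarith [Real.add_one_le_exp t, Real.add_one_le_exp |t|, neg_abs_le t]
  rw [abs_le]
  constructor <;> linarith

theorem klFun_exp_le_abs_mul_exp_abs_sub_one (t : ℝ) :
    klFun (Real.exp t) ≤ |t| * (Real.exp |t| - 1) :=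
  calc klFun (Real.exp t)
    _ ≤ (Real.exp t - 1) * t := by
      simpa only [Real.log_exp] using klFun_le_sub_one_mul_log (Real.exp_pos t)
    _ ≤ |Real.exp t - 1| * |t| := by
      rw [← abs_mul]
      exact le_abs_self _
    _ ≤ (Real.exp |t| - 1) * |t| := by
      gcongr
      exact abs_exp_sub_one_le_exp_abs_sub_one t
    _ = |t| * (Real.exp |t| - 1) := mul_comm _ _

theorem klFun_exp_le_of_abs_le {t ε : ℝ} (ht : |t| ≤ ε) :
    klFun (Real.exp t) ≤ ε * (Real.exp ε - 1) := by
  refine (klFun_exp_le_abs_mul_exp_abs_sub_one t).trans ?_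
  have exp_abs_sub_one_nonneg : 0 ≤ Real.exp |t| - 1 :=
    sub_nonneg.2 (Real.one_le_exp (abs_nonneg t))
  have ε_nonneg : 0 ≤ ε := (abs_nonneg t).trans ht
  gcongr

end RealInequalities

section LogLikelihoodRatio

variable {X : Type*} [MeasurableSpace X] {μ ν : Measure X}

theorem rnDeriv_le_of_le_smul [SigmaFinite ν] {c : ℝ≥0∞} (h : μ ≤ c • ν) :
    ∀ᵐ x ∂ν, μ.rnDeriv ν x ≤ c := by
  refine ae_le_of_forall_setLIntegral_le_of_sigmaFinite (μ.measurable_rnDeriv ν) fun s _ _ ↦ ?_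
  rw [setLIntegral_const]
  exact (Measure.setLIntegral_rnDeriv_le s).trans (h s)

theorem llr_le_of_le_smul [SigmaFinite μ] [SigmaFinite ν] {a : ℝ}
    (h : μ ≤ ENNReal.ofReal (Real.exp a) • ν) : ∀ᵐ x ∂μ, llr μ ν x ≤ a := by
  have hμν : μ ≪ ν := Measure.absolutelyContinuous_of_le_smul h
  filter_upwards [hμν.ae_le (rnDeriv_le_of_le_smul h), exp_llr_of_ac μ ν hμν] with x hle hexp
  rw [← Real.exp_le_exp, hexp]
  exact ENNReal.toReal_le_of_le_ofReal (Real.exp_pos a).le hle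

theorem abs_llr_le_of_le_smul [SigmaFinite μ] [SigmaFinite ν] {ε : ℝ}
    (hμν : μ ≤ ENNReal.ofReal (Real.exp ε) • ν) (hνμ : ν ≤ ENNReal.ofReal (Real.exp ε) • μ) :
    ∀ᵐ x ∂μ, |llr μ ν x| ≤ ε := by
  have μ_ac_ν : μ ≪ ν := Measure.absolutelyContinuous_of_le_smul hμν
  filter_upwards [llr_le_of_le_smul hμν, μ_ac_ν.ae_le (llr_le_of_le_smul hνμ), neg_llr μ_ac_ν]
    with x upper lower hneg
  rw [← hneg, Pi.neg_apply] at lower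
  exact abs_le.2 ⟨neg_le.1 lower, upper⟩

end LogLikelihoodRatio

theorem klDiv_le_of_le_smul {X : Type*} [MeasurableSpace X] {P Q : Measure X}
    [IsFiniteMeasure P] [IsFiniteMeasure Q] {ε : ℝ}
    (hPQ : P ≤ ENNReal.ofReal (Real.exp ε) • Q) (hQP : Q ≤ ENNReal.ofReal (Real.exp ε) • P) :
    klDiv P Q ≤ ENNReal.ofReal (ε * (Real.exp ε - 1)) * Q Set.univ := by
  have P_ac_Q : P ≪ Q := Measure.absolutelyContinuous_of_le_smul hPQ
  have Q_ac_P : Q ≪ P := Measure.absolutelyContinuous_of_le_smul hQP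
  have klFun_le : ∀ᵐ x ∂Q, klFun (P.rnDeriv Q x).toReal ≤ ε * (Real.exp ε - 1) := by
    filter_upwards [Q_ac_P.ae_le (abs_llr_le_of_le_smul hPQ hQP), exp_llr_of_ac' P Q Q_ac_P]
      with x habs hexp
    rw [← hexp]
    exact klFun_exp_le_of_abs_le habs
  calc klDiv P Q
    _ = ∫⁻ x, ENNReal.ofReal (klFun (P.rnDeriv Q x).toReal) ∂Q :=
      klDiv_eq_lintegral_klFun_of_ac P_ac_Q
    _ ≤ ∫⁻ _, ENNReal.ofReal (ε * (Real.exp ε - 1)) ∂Q :=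
      lintegral_mono_ae (klFun_le.mono fun _ ↦ ENNReal.ofReal_le_ofReal)
    _ = ENNReal.ofReal (ε * (Real.exp ε - 1)) * Q Set.univ := lintegral_const _

theorem stmt9_general {X : Type*} [MeasurableSpace X] (P Q : Measure X)
    [IsFiniteMeasure P] [IsFiniteMeasure Q] (ε₀ : ℝ) (hε₀ : 0 ≤ ε₀)
    (hPQ : ∀ E : Set X, MeasurableSet E → P E ≤ ENNReal.ofReal (Real.exp ε₀) * Q E)
    (hQP : ∀ E : Set X, MeasurableSet E → Q E ≤ ENNReal.ofReal (Real.exp ε₀) * P E) :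
    ∫ x, Real.log ((P.rnDeriv Q x).toReal) ∂P + Q.real Set.univ - P.real Set.univ
      ≤ ε₀ * (Real.exp ε₀ - 1) * Q.real Set.univ := by
  have hkl : klDiv P Q ≤ ENNReal.ofReal (ε₀ * (Real.exp ε₀ - 1)) * Q Set.univ :=
    klDiv_le_of_le_smul (Measure.le_iff.2 hPQ) (Measure.le_iff.2 hQP)
  have bound_ne_top : ENNReal.ofReal (ε₀ * (Real.exp ε₀ - 1)) * Q Set.univ ≠ ∞ := by finiteness
  obtain ⟨P_ac_Q, llr_integrable⟩ := klDiv_ne_top_iff.1 (ne_top_of_le_ne_top bound_ne_top hkl)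
  have bound_nonneg : 0 ≤ ε₀ * (Real.exp ε₀ - 1) :=
    mul_nonneg hε₀ (sub_nonneg.2 (Real.one_le_exp hε₀))
  calc ∫ x, Real.log ((P.rnDeriv Q x).toReal) ∂P + Q.real Set.univ - P.real Set.univ
    _ = (klDiv P Q).toReal := (toReal_klDiv P_ac_Q llr_integrable).symm
    _ ≤ (ENNReal.ofReal (ε₀ * (Real.exp ε₀ - 1)) * Q Set.univ).toReal :=
      ENNReal.toReal_mono bound_ne_top hkl
    _ = ε₀ * (Real.exp ε₀ - 1) * Q.real Set.univ := by
      rw [ENNReal.toReal_mul, ENNReal.toReal_ofReal bound_nonneg, measureReal_def]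

/-- If probability measures `P, Q` on a measurable space `X` satisfy
`P(E) ≤ e^{ε₀}·Q(E)` and `Q(E) ≤ e^{ε₀}·P(E)` for every measurable `E` (the
multiplicative closeness of an `(ε₀,0)`-DP mechanism on neighboring datasets),
then the Kullback–Leibler divergence `KL(P‖Q) = ∫ log(dP/dQ) dP` is at most
`ε₀·(e^{ε₀} − 1)`. -/
theorem stmt9 {X : Type*} [MeasurableSpace X] (P Q : Measure X)
    [IsProbabilityMeasure P] [IsProbabilityMeasure Q]
    (ε₀ : ℝ) (hε₀ : 0 ≤ ε₀)
    (hPQ : ∀ E : Set X, MeasurableSet E →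
      P E ≤ ENNReal.ofReal (Real.exp ε₀) * Q E)
    (hQP : ∀ E : Set X, MeasurableSet E →
      Q E ≤ ENNReal.ofReal (Real.exp ε₀) * P E) :
    ∫ x, Real.log ((P.rnDeriv Q x).toReal) ∂P ≤ ε₀ * (Real.exp ε₀ - 1) := by
  simpa using stmt9_general P Q ε₀ hε₀ hPQ hQP
end
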